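/- For all integers n ≥ 0 and t ≥ 0 and for each α ∈ {4, 24, 34}, B_{35}^{(35t+6)}(35n + α) ≡ 0 (mod 35). -/

import Mathlib

/-!
Write `f = ∏ (1 - X ^ i)`. The generating function of `B 35 r` is the `r`-th power of
`f(X ^ 35) / f(X)`. For a prime `p ∣ 35` and `p ∣ r + s`, modulo `p` this is `f ^ s` times a series
in `X ^ p`, because `f ^ (-(r + s))` is a `p`-th power (`dvd_B_of_coeff`). For `r = 35 t + 6` this
applies with `p = 7`, `s = 1` and with `p = 5`, `s = 4`.

Modulo `7`, Euler's pentagonal number theorem finishes the proof: no pentagonal number is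
congruent to `3`, `4` or `6` modulo `7`.

Modulo `5`, it has to be shown that `f ^ 4` has no terms with exponent congruent to `4`. Split the
pentagonal series as `f = A + B + C` by exponents congruent to `0`, `1`, `2` modulo `5`. The terms
in question are `B ^ 4 + 12 A B ^ 2 C + 6 A ^ 2 C ^ 2`, which equals `-5 B ^ 4` because of the
relation `A C = -B ^ 2` (`pentPart_mul_add_sq`). That relation is proved by a sign-reversing
involution on pairs of indices of pentagonal numbers.
-/

/-- `B ℓ r n` is the number of `ℓ`-regular `r`-multipartitions of `n`:
ordered `r`-tuples `(λ⁽¹⁾, …, λ⁽ʳ⁾)` of partitions, none of whose parts is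
divisible by `ℓ`, whose sizes sum to `n`. -/
def B (ℓ r n : ℕ) : ℕ :=
  Fintype.card {f : Fin r → Σ a : Fin (n + 1), Nat.Partition a //
    (∑ i, ((f i).1 : ℕ)) = n ∧ ∀ i, ∀ part ∈ (f i).2.parts, ¬ ℓ ∣ part}

open PowerSeries Finset

/-! ### Power series supported on a residue class -/

/-- The power series `F` only involves exponents congruent to `r` modulo `p`. -/
def InClass {R : Type*} [CommRing R] (p : ℕ) (r : ZMod p) (F : R⟦X⟧) : Prop :=
  ∀ n : ℕ, (n : ZMod p) ≠ r → coeff n F = 0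

namespace InClass

variable {R : Type*} [CommRing R] {p : ℕ} {r s : ZMod p} {F G : R⟦X⟧}

lemma add (hF : InClass p r F) (hG : InClass p r G) : InClass p r (F + G) := fun n hn ↦ by
  simp [hF n hn, hG n hn]

lemma mul (hF : InClass p r F) (hG : InClass p s G) : InClass p (r + s) (F * G) := fun n hn ↦ by
  rw [coeff_mul]
  refine sum_eq_zero fun x hx ↦ ?_
  rw [HasAntidiagonal.mem_antidiagonal] at hx
  by_cases h1 : (x.1 : ZMod p) = r
  · have h2 : (x.2 : ZMod p) ≠ s := by
      rintro rfl
      exact hn (by rw [← hx, ← h1]; push_cast; rfl)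
    rw [hG _ h2, mul_zero]
  · rw [hF _ h1, zero_mul]

lemma one : InClass p 0 (1 : R⟦X⟧) := fun n hn ↦ by
  rw [coeff_one, if_neg]
  rintro rfl
  simp at hn

lemma pow (hF : InClass p r F) (m : ℕ) : InClass p (m * r) (F ^ m) := by
  induction m with
  | zero => simpa using one
  | succ m ih =>
    rw [pow_succ, show ((m + 1 : ℕ) : ZMod p) * r = m * r + r by push_cast; ring]
    exact ih.mul hF

lemma pow_zero_class (hF : InClass p 0 F) (m : ℕ) : InClass p 0 (F ^ m) := by
  simpa using hF.pow m

lemma natCast_mul (hF : InClass p r F) (m : ℕ) : InClass p r ((m : R⟦X⟧) * F) := fun n hn ↦ by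
  rw [← nsmul_eq_mul, map_nsmul, hF n hn, smul_zero]

/-- A `p`-th power in characteristic `p` has zero derivative. -/
lemma pow_char [Fact p.Prime] (F : (ZMod p)⟦X⟧) : InClass p 0 (F ^ p) := fun n hn ↦ by
  cases n with
  | zero => simp at hn
  | succ n =>
    have h1 : (PowerSeries.derivative (ZMod p)) (F ^ p) = 0 := by
      rw [Derivation.leibniz_pow, ← Nat.cast_smul_eq_nsmul (ZMod p), CharP.cast_eq_zero, zero_smul]
    have h := congrArg (coeff n) h1
    rw [coeff_derivative, map_zero] at h
    rcases mul_eq_zero.mp h with h | h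
    · exact h
    · exact absurd (by push_cast; exact h) hn

lemma mul_coeff_eq_zero (hF : InClass p 0 F) {n : ℕ}
    (hG : ∀ m : ℕ, (m : ZMod p) = n → coeff m G = 0) : coeff n (F * G) = 0 := by
  rw [coeff_mul]
  refine sum_eq_zero fun x hx ↦ ?_
  rw [HasAntidiagonal.mem_antidiagonal] at hx
  by_cases h1 : (x.1 : ZMod p) = 0
  · rw [hG x.2 (by rw [← hx]; push_cast; rw [h1, zero_add]), mul_zero]
  · rw [hF _ h1, zero_mul]

end InClass

/-! ### Generating functions -/

/-- The generating function of `ℓ`-regular partitions. -/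
noncomputable def regularSeries (R : Type*) [CommRing R] (ℓ : ℕ) : R⟦X⟧ :=
  PowerSeries.mk fun n ↦ (#(Nat.Partition.restricted n (¬ ℓ ∣ ·)) : R)

lemma B_eq_sum (ℓ r n : ℕ) :
    B ℓ r n = ∑ l ∈ finsuppAntidiag (univ : Finset (Fin r)) n,
      ∏ i, #(Nat.Partition.restricted (l i) (¬ ℓ ∣ ·)) := by
  classical
  let e : {f : Fin r → Σ a : Fin (n + 1), Nat.Partition a //
      (∑ i, ((f i).1 : ℕ)) = n ∧ ∀ i, ∀ part ∈ (f i).2.parts, ¬ ℓ ∣ part} ≃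
      Σ l : {l : Fin r → Fin (n + 1) // ∑ i, (l i : ℕ) = n},
        ∀ i, {p : Nat.Partition (l.1 i) // ∀ part ∈ p.parts, ¬ ℓ ∣ part} :=
    { toFun := fun f ↦ ⟨⟨fun i ↦ (f.1 i).1, f.2.1⟩, fun i ↦ ⟨(f.1 i).2, f.2.2 i⟩⟩
      invFun := fun g ↦ ⟨fun i ↦ ⟨g.1.1 i, (g.2 i).1⟩, g.1.2, fun i ↦ (g.2 i).2⟩
      left_inv := fun f ↦ rfl
      right_inv := fun g ↦ rfl }
  have h1 : B ℓ r n = ∑ l : {l : Fin r → Fin (n + 1) // ∑ i, (l i : ℕ) = n},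
      ∏ i, #(Nat.Partition.restricted (l.1 i) (¬ ℓ ∣ ·)) := by
    rw [B, Fintype.card_congr e, Fintype.card_sigma]
    refine sum_congr rfl fun l _ ↦ ?_
    rw [Fintype.card_pi]
    refine prod_congr rfl fun i _ ↦ ?_
    rw [Fintype.card_subtype]
    rfl
  rw [h1]
  refine sum_bij (fun l _ ↦ Finsupp.equivFunOnFinite.symm fun i ↦ (l.1 i : ℕ)) ?_ ?_ ?_ ?_
  · intro l _
    simp [mem_finsuppAntidiag, l.2]
  · intro l _ l' _ h
    ext i
    simpa using DFunLike.congr_fun h i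
  · intro l hl
    have hs : ∑ i, l i = n := (mem_finsuppAntidiag.mp hl).1
    have hle : ∀ i, l i < n + 1 := fun i ↦
      Nat.lt_succ_of_le (hs ▸ single_le_sum (f := fun i ↦ l i) (fun _ _ ↦ Nat.zero_le _)
        (mem_univ i))
    exact ⟨⟨fun i ↦ ⟨l i, hle i⟩, hs⟩, mem_univ _, by ext i; simp⟩
  · intro l _
    rfl

lemma natCast_B (R : Type*) [CommRing R] (ℓ r n : ℕ) :
    (B ℓ r n : R) = coeff n (regularSeries R ℓ ^ r) := by
  classical
  have h := coeff_prod (fun _ : Fin r ↦ regularSeries R ℓ) n univ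
  rw [prod_const, card_univ, Fintype.card_fin] at h
  rw [h, B_eq_sum]
  simp [regularSeries]

/-- Multiplying by Euler's product turns the generating function of `ℓ`-regular partitions into
`∏ (1 - X ^ (ℓ i))`, which only involves exponents divisible by `ℓ`. -/
lemma regularSeries_mul_pentagonalSeries (R : Type*) [CommRing R] [IsDomain R] {ℓ p : ℕ}
    (hℓ : 0 < ℓ) (hp : p ∣ ℓ) :
    InClass p 0 (regularSeries R ℓ * pentagonalSeries R) := by
  open scoped PowerSeries.WithPiTopology in
  let _ : TopologicalSpace R := ⊥
  have _ : DiscreteTopology R := ⟨rfl⟩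
  have h := (Nat.Partition.hasProd_powerSeriesMk_card_countRestricted R hℓ).mul
    (WithPiTopology.hasProd_one_sub_X_pow R)
  rw [← Nat.Partition.powerSeriesMk_card_restricted_eq_powerSeriesMk_card_countRestricted R hℓ] at h
  change HasProd _ (regularSeries R ℓ * pentagonalSeries R) at h
  have hterm : ∀ i : ℕ, InClass p 0
      ((∑ j ∈ range ℓ, (X : R⟦X⟧) ^ ((i + 1) * j)) * (1 - X ^ (i + 1))) := fun i n hn ↦ by
    have : (∑ j ∈ range ℓ, (X : R⟦X⟧) ^ ((i + 1) * j)) * (1 - X ^ (i + 1))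
        = 1 - X ^ ((i + 1) * ℓ) := by
      simp_rw [pow_mul, geom_sum_mul_neg]
    rw [this, map_sub, InClass.one n hn, coeff_X_pow, if_neg, sub_zero]
    rintro rfl
    exact hn ((ZMod.natCast_eq_zero_iff _ _).mpr (hp.mul_left _))
  intro n hn
  rw [HasProd, WithPiTopology.tendsto_iff_coeff_tendsto] at h
  refine tendsto_nhds_unique (h n) (tendsto_const_nhds.congr fun s ↦ ?_)
  have hs : InClass p 0 (∏ i ∈ s,
      ((∑ j ∈ range ℓ, (X : R⟦X⟧) ^ ((i + 1) * j)) * (1 - X ^ (i + 1)))) := by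
    classical
    induction s using Finset.induction_on with
    | empty => simpa using InClass.one
    | insert a s ha ih =>
      rw [prod_insert ha]
      simpa using (hterm a).mul ih
  exact (hs n hn).symm

lemma coeff_zero_pentagonalSeries (R : Type*) [CommRing R] :
    constantCoeff (pentagonalSeries R) = 1 := by
  have h := coeff_pentagonalSeries_pentagonal R 0
  simpa [pentagonal_def] using h

/-- Modulo `p ∣ ℓ`, if `p ∣ r + s` then `∑ B ℓ r n X ^ n` is the `s`-th power of Euler's product
times a series in `X ^ p`; hence a residue class avoided by the former is avoided by the latter. -/
lemma dvd_B_of_coeff {p ℓ r s N : ℕ} [Fact p.Prime] (hℓ : 0 < ℓ) (hp : p ∣ ℓ) (hrs : p ∣ r + s)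
    (h : ∀ m : ℕ, (m : ZMod p) = N → coeff m (pentagonalSeries (ZMod p) ^ s) = 0) :
    p ∣ B ℓ r N := by
  rw [← ZMod.natCast_eq_zero_iff, natCast_B]
  set f := pentagonalSeries (ZMod p) with hf
  set G := regularSeries (ZMod p) ℓ with hG
  have hH : InClass p 0 (G * f) := regularSeries_mul_pentagonalSeries (ZMod p) hℓ hp
  have hfu : f * f⁻¹ = 1 := PowerSeries.mul_inv_cancel f (by simp [hf, coeff_zero_pentagonalSeries])
  obtain ⟨c, hc⟩ := hrs
  have key : G ^ r = ((G * f) ^ r * (f⁻¹ ^ c) ^ p) * f ^ s := by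
    have : (f⁻¹ ^ c) ^ p = f⁻¹ ^ r * f⁻¹ ^ s := by rw [← pow_mul, ← pow_add, hc, mul_comm]
    calc G ^ r = G ^ r * (f * f⁻¹) ^ r * (f * f⁻¹) ^ s := by simp [hfu]
      _ = _ := by rw [this]; simp only [mul_pow]; ring
  rw [key]
  refine InClass.mul_coeff_eq_zero ?_ h
  simpa using (hH.pow_zero_class r).mul (InClass.pow_char (f⁻¹ ^ c))

/-! ### Modulo seven -/

lemma two_mul_pentagonal_cast (p : ℕ) (k : ℤ) :
    2 * ((pentagonal k : ℕ) : ZMod p) = k * (3 * k - 1) := by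
  have := congrArg (Int.cast : ℤ → ZMod p) (two_mul_natCast_pentagonal k)
  push_cast at this
  exact this

lemma coeff_pentagonalSeries_seven {m : ℕ}
    (hm : (m : ZMod 7) = 3 ∨ (m : ZMod 7) = 4 ∨ (m : ZMod 7) = 6) :
    coeff m (pentagonalSeries (ZMod 7)) = 0 := by
  refine coeff_pentagonalSeries_eq_zero _ ?_
  rintro ⟨k, rfl⟩
  have h := two_mul_pentagonal_cast 7 k
  generalize (k : ZMod 7) = x at h
  generalize ((pentagonal k : ℕ) : ZMod 7) = y at h hm
  revert x y
  decide

/-! ### Modulo five -/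

/-- The part of Euler's pentagonal series indexed by the `k` with `k` modulo `5` in `S`. -/
noncomputable def pentPart (R : Type*) [CommRing R] (S : Finset (ZMod 5)) : R⟦X⟧ :=
  PowerSeries.mk fun n ↦ ∑ k ∈ Icc (-(n : ℤ)) n,
    if (k : ZMod 5) ∈ S ∧ pentagonal k = n then ((Int.negOnePow k : ℤ) : R) else 0

lemma abs_le_pentagonal (k : ℤ) : -(pentagonal k : ℤ) ≤ k ∧ k ≤ pentagonal k := by
  have h := two_mul_natCast_pentagonal k
  rcases lt_trichotomy k 0 with hk | hk | hk
  · constructor <;> nlinarith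
  · subst hk; constructor <;> omega
  · constructor <;> nlinarith

/-- The range of summation can be enlarged. -/
lemma coeff_pentPart (R : Type*) [CommRing R] (S : Finset (ZMod 5)) {n N : ℕ} (hn : n ≤ N) :
    coeff n (pentPart R S) = ∑ k ∈ Icc (-(N : ℤ)) N,
      if (k : ZMod 5) ∈ S ∧ pentagonal k = n then ((Int.negOnePow k : ℤ) : R) else 0 := by
  rw [pentPart, coeff_mk]
  refine sum_subset (Icc_subset_Icc (by omega) (by omega)) fun k _ hk ↦ if_neg ?_
  rintro ⟨-, rfl⟩
  exact hk (mem_Icc.mpr (abs_le_pentagonal k))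

lemma coeff_pentPart_mul (R : Type*) [CommRing R] (S T : Finset (ZMod 5)) (N : ℕ) :
    coeff N (pentPart R S * pentPart R T) =
      ∑ x ∈ Icc (-(N : ℤ)) N ×ˢ Icc (-(N : ℤ)) N,
        if (x.1 : ZMod 5) ∈ S ∧ (x.2 : ZMod 5) ∈ T ∧ pentagonal x.1 + pentagonal x.2 = N then
          ((Int.negOnePow (x.1 + x.2) : ℤ) : R) else 0 := by
  have h : ∀ y ∈ HasAntidiagonal.antidiagonal N, coeff y.1 (pentPart R S) * coeff y.2 (pentPart R T) =
      ∑ x ∈ Icc (-(N : ℤ)) N ×ˢ Icc (-(N : ℤ)) N,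
        if (pentagonal x.1, pentagonal x.2) = y then
          (if (x.1 : ZMod 5) ∈ S ∧ (x.2 : ZMod 5) ∈ T then
            ((Int.negOnePow (x.1 + x.2) : ℤ) : R) else 0) else 0 := by
    intro y hy
    rw [HasAntidiagonal.mem_antidiagonal] at hy
    rw [coeff_pentPart R S (show y.1 ≤ N by omega), coeff_pentPart R T (show y.2 ≤ N by omega),
      sum_mul_sum, sum_product]
    refine sum_congr rfl fun k _ ↦ sum_congr rfl fun l _ ↦ ?_
    have hsign : ((Int.negOnePow (k + l) : ℤ) : R) =
        ((Int.negOnePow k : ℤ) : R) * ((Int.negOnePow l : ℤ) : R) := by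
      rw [Int.negOnePow_add]; push_cast; rfl
    simp only [hsign, Prod.ext_iff]
    split_ifs <;> simp_all
  rw [coeff_mul, sum_congr rfl h, sum_comm]
  refine sum_congr rfl fun x _ ↦ ?_
  rw [sum_ite_eq]
  simp only [HasAntidiagonal.mem_antidiagonal]
  split_ifs <;> simp_all

lemma pentPart_union (R : Type*) [CommRing R] {S T : Finset (ZMod 5)} (h : Disjoint S T) :
    pentPart R (S ∪ T) = pentPart R S + pentPart R T := by
  ext n
  simp only [map_add, pentPart, coeff_mk, ← sum_add_distrib]
  refine sum_congr rfl fun k _ ↦ ?_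
  have h' : (k : ZMod 5) ∈ S → (k : ZMod 5) ∉ T := fun hS ↦ Finset.disjoint_left.mp h hS
  clear h
  simp only [mem_union]
  by_cases hS : (k : ZMod 5) ∈ S <;> by_cases hT : (k : ZMod 5) ∈ T <;> simp_all

lemma pentagonalSeries_eq_pentPart (R : Type*) [CommRing R] :
    pentagonalSeries R = pentPart R univ := by
  ext n
  simp only [pentPart, coeff_mk, mem_univ, true_and]
  by_cases hn : n ∈ Set.range pentagonal
  · obtain ⟨k, rfl⟩ := hn
    simp only [pentagonal_inj, coeff_pentagonalSeries_pentagonal]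
    rw [sum_ite_eq', if_pos (mem_Icc.mpr (abs_le_pentagonal k))]
  · rw [coeff_pentagonalSeries_eq_zero R hn]
    exact (sum_eq_zero fun k _ ↦ if_neg fun hk ↦ hn ⟨k, hk⟩).symm

lemma pentagonalSeries_eq_add (R : Type*) [CommRing R] :
    pentagonalSeries R = pentPart R {0, 2} + pentPart R {1} + pentPart R {3, 4} := by
  rw [← pentPart_union R (by decide), ← pentPart_union R (by decide), pentagonalSeries_eq_pentPart]
  congr 1
  decide

lemma pentPart_inClass (R : Type*) [CommRing R] {S : Finset (ZMod 5)} {r : ZMod 5}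
    (h : ∀ x ∈ S, ∀ y : ZMod 5, 2 * y = x * (3 * x - 1) → y = r) :
    InClass 5 r (pentPart R S) := fun n hn ↦ by
  rw [pentPart, coeff_mk]
  refine sum_eq_zero fun k _ ↦ if_neg ?_
  rintro ⟨hk, rfl⟩
  exact hn (h _ hk _ (two_mul_pentagonal_cast 5 k))

/-- If `f = A + B + C` is the splitting of Euler's pentagonal series by exponents modulo `5`, then
`A C = - B ^ 2`. The coefficients of `A C + B ^ 2` are signed counts of the pairs `(k, l)` with
`2 k + l ≡ 3 mod 5` and a given sum of pentagonal numbers. In the coordinates `x = 6 k - 1`,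
`y = 6 l - 1` that sum is a function of `x ^ 2 + y ^ 2`, and the reflection
`(x, y) ↦ (-(3 x + 4 y) / 5, (3 y - 4 x) / 5)` preserves the pairs and reverses the sign. -/
lemma pentPart_mul_add_sq (R : Type*) [CommRing R] :
    pentPart R {0, 2} * pentPart R {3, 4} + pentPart R {1} * pentPart R {1} = 0 := by
  have hA : pentPart R {0, 2} = pentPart R {0} + pentPart R {2} :=
    pentPart_union R (S := {0}) (T := {2}) (by decide)
  have hC : pentPart R {3, 4} = pentPart R {3} + pentPart R {4} :=
    pentPart_union R (S := {3}) (T := {4}) (by decide)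
  -- The factors are ordered so that the residues `(k, l)` of each product satisfy `2 k + l = 3`.
  have hsplit : pentPart R {0, 2} * pentPart R {3, 4} + pentPart R {1} * pentPart R {1} =
      pentPart R {0} * pentPart R {3} + pentPart R {1} * pentPart R {1} +
      pentPart R {2} * pentPart R {4} + pentPart R {3} * pentPart R {2} +
      pentPart R {4} * pentPart R {0} := by
    rw [hA, hC]; ring
  rw [hsplit]
  ext N
  simp only [map_add, coeff_pentPart_mul, ← sum_add_distrib, map_zero, mem_singleton]
  have hcond : ∀ x : ℤ × ℤ, ∀ c : R,
      ((((if (x.1 : ZMod 5) = 0 ∧ (x.2 : ZMod 5) = 3 ∧ pentagonal x.1 + pentagonal x.2 = N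
          then c else 0) +
        (if (x.1 : ZMod 5) = 1 ∧ (x.2 : ZMod 5) = 1 ∧ pentagonal x.1 + pentagonal x.2 = N
          then c else 0)) +
        (if (x.1 : ZMod 5) = 2 ∧ (x.2 : ZMod 5) = 4 ∧ pentagonal x.1 + pentagonal x.2 = N
          then c else 0)) +
        (if (x.1 : ZMod 5) = 3 ∧ (x.2 : ZMod 5) = 2 ∧ pentagonal x.1 + pentagonal x.2 = N
          then c else 0)) +
        (if (x.1 : ZMod 5) = 4 ∧ (x.2 : ZMod 5) = 0 ∧ pentagonal x.1 + pentagonal x.2 = N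
          then c else 0) =
      if 2 * (x.1 : ZMod 5) + x.2 = 3 ∧ pentagonal x.1 + pentagonal x.2 = N then c else 0 := by
    intro x c
    by_cases hN : pentagonal x.1 + pentagonal x.2 = N
    · simp only [hN, and_true]
      generalize (x.1 : ZMod 5) = a
      generalize (x.2 : ZMod 5) = b
      have h5 : ∀ a : ZMod 5, a = 0 ∨ a = 1 ∨ a = 2 ∨ a = 3 ∨ a = 4 := by decide
      rcases h5 a with rfl | rfl | rfl | rfl | rfl <;>
        rcases h5 b with rfl | rfl | rfl | rfl | rfl <;> simp +decide
    · simp [hN]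
  simp only [hcond]
  rw [← sum_filter]
  have hmod : ∀ x : ℤ × ℤ, 2 * (x.1 : ZMod 5) + x.2 = 3 ↔ (2 * x.1 + x.2) % 5 = 3 := by
    intro x
    have := ZMod.intCast_eq_intCast_iff (2 * x.1 + x.2) 3 5
    push_cast at this
    rw [this]
    exact Iff.rfl
  simp only [hmod]
  -- The reflection in the coordinates `(k, l)`.
  refine sum_involution (fun x _ ↦ ((2 - 3 * x.1 - 4 * x.2) / 5, (1 - 4 * x.1 + 3 * x.2) / 5))
    ?_ ?_ ?_ ?_
  · rintro ⟨k, l⟩ hx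
    obtain ⟨-, hkl, -⟩ := mem_filter.mp hx
    dsimp only at hkl ⊢
    obtain ⟨w, hw⟩ : ∃ w, (2 - 3 * k - 4 * l) / 5 + (1 - 4 * k + 3 * l) / 5 = k + l + (2 * w + 1) :=
      ⟨((2 - 3 * k - 4 * l) / 5 + (1 - 4 * k + 3 * l) / 5 - k - l) / 2, by omega⟩
    rw [hw, Int.negOnePow_add (k + l), Int.negOnePow_odd (2 * w + 1) ⟨w, rfl⟩]
    simp
  · rintro ⟨k, l⟩ hx - heq
    obtain ⟨-, hkl, -⟩ := mem_filter.mp hx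
    simp only [Prod.mk.injEq] at heq
    dsimp only at hkl
    omega
  · rintro ⟨k, l⟩ hx
    obtain ⟨-, hkl, hN⟩ := mem_filter.mp hx
    dsimp only at hkl hN ⊢
    obtain ⟨u, hu⟩ : ∃ u, u = (2 - 3 * k - 4 * l) / 5 := ⟨_, rfl⟩
    obtain ⟨v, hv⟩ : ∃ v, v = (1 - 4 * k + 3 * l) / 5 := ⟨_, rfl⟩
    have hu5 : 5 * u = 2 - 3 * k - 4 * l := by omega
    have hv5 : 5 * v = 1 - 4 * k + 3 * l := by omega
    rw [← hu, ← hv]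
    have hsum : pentagonal u + pentagonal v = N := by
      have hk := two_mul_natCast_pentagonal k
      have hl := two_mul_natCast_pentagonal l
      have hu' := two_mul_natCast_pentagonal u
      have hv' := two_mul_natCast_pentagonal v
      have : 25 * (u * (3 * u - 1) + v * (3 * v - 1)) =
          25 * (k * (3 * k - 1) + l * (3 * l - 1)) := by
        linear_combination (3 * (5 * u + (2 - 3 * k - 4 * l)) - 5) * hu5 +
          (3 * (5 * v + (1 - 4 * k + 3 * l)) - 5) * hv5
      omega
    have hu1 := abs_le_pentagonal u
    have hv1 := abs_le_pentagonal v
    simp only [mem_filter, mem_product, mem_Icc]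
    refine ⟨⟨⟨?_, ?_⟩, ?_, ?_⟩, ?_, hsum⟩ <;> omega
  · rintro ⟨k, l⟩ hx
    obtain ⟨-, hkl, -⟩ := mem_filter.mp hx
    dsimp only at hkl ⊢
    rw [Prod.mk.injEq]
    constructor <;> omega

lemma coeff_pentagonalSeries_pow_four {m : ℕ} (hm : (m : ZMod 5) = 4) :
    coeff m (pentagonalSeries (ZMod 5) ^ 4) = 0 := by
  have hA : InClass 5 0 (pentPart (ZMod 5) {0, 2}) := pentPart_inClass _ (by decide)
  have hB : InClass 5 1 (pentPart (ZMod 5) {1}) := pentPart_inClass _ (by decide)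
  have hC : InClass 5 2 (pentPart (ZMod 5) {3, 4}) := pentPart_inClass _ (by decide)
  have hrel := pentPart_mul_add_sq (ZMod 5)
  rw [pentagonalSeries_eq_add]
  set A := pentPart (ZMod 5) {0, 2}
  set B := pentPart (ZMod 5) {1}
  set C := pentPart (ZMod 5) {3, 4}
  have h5 : (5 : (ZMod 5)⟦X⟧) = 0 := by
    have : ((5 : ℕ) : (ZMod 5)⟦X⟧) = 0 := by
      rw [← map_natCast (PowerSeries.C (R := ZMod 5)), CharP.cast_eq_zero, map_zero]
    exact_mod_cast this
  have mono : ∀ a b c d : ℕ, ((b + 2 * c : ℕ) : ZMod 5) ≠ 4 →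
      coeff m ((d : (ZMod 5)⟦X⟧) * (A ^ a * B ^ b * C ^ c)) = 0 := by
    intro a b c d hne
    refine ((((hA.pow a).mul (hB.pow b)).mul (hC.pow c)).natCast_mul d) m ?_
    rw [hm]
    intro h
    apply hne
    rw [h]
    push_cast
    ring
  have key : (A + B + C) ^ 4 =
      (1 : ℕ) * (A ^ 4 * B ^ 0 * C ^ 0) + (4 : ℕ) * (A ^ 3 * B ^ 1 * C ^ 0)
      + (4 : ℕ) * (A ^ 3 * B ^ 0 * C ^ 1) + (6 : ℕ) * (A ^ 2 * B ^ 2 * C ^ 0)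
      + (12 : ℕ) * (A ^ 2 * B ^ 1 * C ^ 1) + (4 : ℕ) * (A ^ 1 * B ^ 3 * C ^ 0)
      + (12 : ℕ) * (A ^ 1 * B ^ 1 * C ^ 2) + (4 : ℕ) * (A ^ 1 * B ^ 0 * C ^ 3)
      + (4 : ℕ) * (A ^ 0 * B ^ 3 * C ^ 1) + (6 : ℕ) * (A ^ 0 * B ^ 2 * C ^ 2)
      + (4 : ℕ) * (A ^ 0 * B ^ 1 * C ^ 3) + (1 : ℕ) * (A ^ 0 * B ^ 0 * C ^ 4) := by
    push_cast
    linear_combination (6 * A * C + 6 * B ^ 2) * hrel - B ^ 4 * h5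
  rw [key]
  simp only [map_add]
  iterate 12 rw [mono _ _ _ _ (by decide)]
  simp

theorem stmt_14 (n t : ℕ) (α : ℕ) (hα : α ∈ ({4, 24, 34} : Finset ℕ)) :
    B 35 (35 * t + 6) (35 * n + α) ≡ 0 [MOD 35] := by
  have hα' : α = 4 ∨ α = 24 ∨ α = 34 := by simpa using hα
  have : Fact (Nat.Prime 5) := ⟨by norm_num⟩
  have : Fact (Nat.Prime 7) := ⟨by norm_num⟩
  have h5 : 5 ∣ B 35 (35 * t + 6) (35 * n + α) := by
    refine dvd_B_of_coeff (s := 4) (by norm_num) (by norm_num) (by omega) fun m hm ↦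
      coeff_pentagonalSeries_pow_four ?_
    rw [hm, show (4 : ZMod 5) = ((4 : ℕ) : ZMod 5) by rfl, ZMod.natCast_eq_natCast_iff', ]
    omega
  have h7 : 7 ∣ B 35 (35 * t + 6) (35 * n + α) := by
    refine dvd_B_of_coeff (s := 1) (by norm_num) (by norm_num) (by omega) fun m hm ↦ ?_
    rw [pow_one]
    refine coeff_pentagonalSeries_seven ?_
    rw [hm, show (3 : ZMod 7) = ((3 : ℕ) : ZMod 7) by rfl,
      show (4 : ZMod 7) = ((4 : ℕ) : ZMod 7) by rfl, show (6 : ZMod 7) = ((6 : ℕ) : ZMod 7) by rfl]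
    simp only [ZMod.natCast_eq_natCast_iff']
    omega
  rw [Nat.modEq_zero_iff_dvd]
  exact Nat.Coprime.mul_dvd_of_dvd_of_dvd (by norm_num : Nat.Coprime 5 7) h5 h7
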